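/- Assume additionally that ρ is continuous and |det ρ(a)| = 1 for all a ∈ ℝ^k. Let f and g be Schwartz functions on ℝ^d × ℝ^k, let f̃(n,a,b) = f(ρ(a)n, a+b), and for each fixed b let F₁(λ, μ, b) denote the Euclidean Fourier transform in the variables (n, a) of the additive convolution (n,a) ↦ ∫ f̃(n - m, a - c, b) g(m,c) dm dc, evaluated at (λ, μ). Fix (λ, μ) and assume that b ↦ F₁(λ, μ, b) is continuous and integrable and that its Fourier transform ν ↦ ∫_{ℝ^k} F₁(λ, μ, b) e^{-2πi⟨ν, b⟩} db is integrable. Then ∫_{ℝ^k} (∫_{ℝ^k} F₁(λ, μ, b) e^{-2πi⟨ν, b⟩} db) dν = 𝓕[(n,a) ↦ f(ρ(a)n, a)](λ, μ) · 𝓕g(λ, μ). -/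

import Mathlib

open MeasureTheory
open scoped RealInnerProductSpace

/-- iterated Fourier transform of the convolution of the invariant extension
`f̃` with `g`, integrated over the extra frequency variable, equals the product of Fourier
transforms. -/
theorem stmt_3 (d k : ℕ)
    (ρ : EuclideanSpace ℝ (Fin k) →
      (EuclideanSpace ℝ (Fin d) ≃ₗ[ℝ] EuclideanSpace ℝ (Fin d)))
    (hρ : ∀ a c x, ρ (a + c) x = ρ a (ρ c x))
    (hρ0 : ∀ x, ρ 0 x = x)
    (hcont : Continuous fun p : EuclideanSpace ℝ (Fin k) × EuclideanSpace ℝ (Fin d) =>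
      ρ p.1 p.2)
    (hdet : ∀ a, |LinearMap.det ((ρ a).toLinearMap)| = 1)
    (f g : SchwartzMap (EuclideanSpace ℝ (Fin d) × EuclideanSpace ℝ (Fin k)) ℂ)
    (l : EuclideanSpace ℝ (Fin d)) (μ : EuclideanSpace ℝ (Fin k))
    (F1 : EuclideanSpace ℝ (Fin k) → ℂ)
    (hF1 : ∀ b, F1 b =
      ∫ na : EuclideanSpace ℝ (Fin d) × EuclideanSpace ℝ (Fin k),
        Complex.exp (-(2 * (Real.pi : ℂ) * Complex.I) *
            ((⟪l, na.1⟫ + ⟪μ, na.2⟫ : ℝ) : ℂ)) *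
          ∫ mc : EuclideanSpace ℝ (Fin d) × EuclideanSpace ℝ (Fin k),
            f (ρ (na.2 - mc.2) (na.1 - mc.1), (na.2 - mc.2) + b) * g mc)
    (hF1cont : Continuous F1) (hF1int : Integrable F1)
    (hFTint : Integrable fun ν : EuclideanSpace ℝ (Fin k) =>
      ∫ b : EuclideanSpace ℝ (Fin k),
        F1 b * Complex.exp (-(2 * (Real.pi : ℂ) * Complex.I) * ((⟪ν, b⟫ : ℝ) : ℂ))) :
    (∫ ν : EuclideanSpace ℝ (Fin k),
      ∫ b : EuclideanSpace ℝ (Fin k),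
        F1 b * Complex.exp (-(2 * (Real.pi : ℂ) * Complex.I) * ((⟪ν, b⟫ : ℝ) : ℂ))) =
    (∫ na : EuclideanSpace ℝ (Fin d) × EuclideanSpace ℝ (Fin k),
        Complex.exp (-(2 * (Real.pi : ℂ) * Complex.I) *
            ((⟪l, na.1⟫ + ⟪μ, na.2⟫ : ℝ) : ℂ)) * f (ρ na.2 na.1, na.2)) *
    (∫ mc : EuclideanSpace ℝ (Fin d) × EuclideanSpace ℝ (Fin k),
        Complex.exp (-(2 * (Real.pi : ℂ) * Complex.I) *
            ((⟪l, mc.1⟫ + ⟪μ, mc.2⟫ : ℝ) : ℂ)) * g mc) := by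
  have hinv : F1 0 = ∫ ν : EuclideanSpace ℝ (Fin k),
      ∫ b : EuclideanSpace ℝ (Fin k),
        F1 b * Complex.exp (-(2 * (Real.pi : ℂ) * Complex.I) * ((⟪ν, b⟫ : ℝ) : ℂ)) := by
    have hF : FourierTransform.fourier F1 = fun ν : EuclideanSpace ℝ (Fin k) =>
      ∫ b : EuclideanSpace ℝ (Fin k),
        F1 b * Complex.exp (-(2 * (Real.pi : ℂ) * Complex.I) * ((⟪ν, b⟫ : ℝ) : ℂ)) := by
      funext ν
      rw [Real.fourier_eq']
      congr 1
      funext b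
      rw [smul_eq_mul, mul_comm, real_inner_comm]
      congr 2
      push_cast
      ring
    have h := hF1cont.fourierInv_fourier_eq hF1int (by rw [hF]; exact hFTint)
    have h0 := congrFun h 0
    rw [Real.fourierInv_eq', hF] at h0
    rw [← h0]
    simp
  rw [← hinv, hF1]
  set e : EuclideanSpace ℝ (Fin d) × EuclideanSpace ℝ (Fin k) → ℂ := fun na =>
    Complex.exp (-(2 * (Real.pi : ℂ) * Complex.I) * ((⟪l, na.1⟫ + ⟪μ, na.2⟫ : ℝ) : ℂ)) with he
  have hecont : Continuous e := by
    rw [he]; fun_prop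
  have henorm : ∀ x, ‖e x‖ = 1 := by
    intro x
    rw [he]
    simp only
    rw [Complex.norm_exp]
    simp
  have hesub : ∀ x y, e x = e (x - y) * e y := by
    intro x y
    simp only [he]
    rw [← Complex.exp_add]
    congr 1
    simp only [Prod.fst_sub, Prod.snd_sub, inner_sub_right]
    push_cast
    ring
  have heint : ∀ u : EuclideanSpace ℝ (Fin d) × EuclideanSpace ℝ (Fin k) → ℂ,
      Integrable u → Integrable fun x => e x * u x := by
    intro u hu
    exact hu.bdd_mul hecont.aestronglyMeasurable (Filter.Eventually.of_forall fun x => (henorm x).le)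
  have hmp : MeasurePreserving
      (fun p : EuclideanSpace ℝ (Fin k) × EuclideanSpace ℝ (Fin d) => (p.1, ρ p.1 p.2))
      (volume.prod volume) (volume.prod volume) := by
    refine MeasurePreserving.skew_product (g := fun a x => ρ a x)
      (MeasurePreserving.id volume) hcont.measurable
      (Filter.Eventually.of_forall fun a => ?_)
    have := Measure.map_linearMap_addHaar_eq_smul_addHaar
      (volume : Measure (EuclideanSpace ℝ (Fin d))) (f := (ρ a).toLinearMap) (by
        intro h; have := hdet a; rw [h] at this; simp at this)
    rw [abs_inv, hdet a] at this
    simpa using this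
  have hT : MeasurePreserving
      (fun p : EuclideanSpace ℝ (Fin d) × EuclideanSpace ℝ (Fin k) => (ρ p.2 p.1, p.2)) := by
    exact Measure.measurePreserving_swap.comp (hmp.comp Measure.measurePreserving_swap)
  haveI hHaar : (volume : Measure (EuclideanSpace ℝ (Fin d) ×
      EuclideanSpace ℝ (Fin k))).IsAddHaarMeasure :=
    Measure.prod.instIsAddHaarMeasure volume volume
  have hh : Integrable fun p : EuclideanSpace ℝ (Fin d) × EuclideanSpace ℝ (Fin k) =>
      f (ρ p.2 p.1, p.2) := hT.integrable_comp_of_integrable f.integrable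
  have key := integral_convolution (μ := volume) (ν := volume) (ContinuousLinearMap.mul ℝ ℂ)
    (heint _ g.integrable) (heint _ hh)
  simp only [ContinuousLinearMap.mul_apply'] at key
  refine Eq.trans ?_ (key.trans (mul_comm _ _))
  congr 1
  funext x
  rw [convolution_def, ← integral_const_mul]
  congr 1
  funext y
  simp only [ContinuousLinearMap.mul_apply', add_zero]
  change e x * _ = _
  rw [hesub x y]
  simp only [Prod.fst_sub, Prod.snd_sub]
  ring
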